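/- Let f, g : ℝ → ℝ be 1-periodic functions of bounded variation on [0,1], let G(x) = ∫₀¹ f(u) f(u+x) du and G_H(x) = ∫₀¹ f_H(u) f_H(u+x) du, where f_H is the Fejér (Cesàro) mean of f of order H. Then V(G − G_H) ≤ 2 V(f) ‖f − f_H‖_{L¹([0,1])}, and consequently V(G − G_H) → 0 as H → ∞. -/

import Mathlib

/-!
For `c`-periodic `f` and `g`, invariance of the integral under translation gives
`G_f(x) - G_g(x) = ∫ (f - g)(u) f(u + x) du + ∫ (f - g)(u) g(u - x) du`. Each term is an average of
translates of `f` or `g`, so by Minkowski's inequality its variation is at most `‖f - g‖₁ V(f)` or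
`‖f - g‖₁ V(g)`. For `g = f_H`, Minkowski's inequality also gives `V(f_H) ≤ V(f)`, since the Fejér
kernel is nonnegative of mass `1`.

For the limit, comparing `f` with its variation function yields
`‖f(· - y) - f‖₁ ≤ V(f) min(y, 1 - y) ≤ V(f) sin(πy) / 2`. Averaging against the kernel and using
`F_H(y) sin²(πy) ≤ 1 / H`, one finds `‖f - f_H‖₁ ≤ V(f) / (2√H)`.
-/

open MeasureTheory Filter

theorem eVariationOn_add_le {α E : Type*} [LinearOrder α] [SeminormedAddCommGroup E]
    (f g : α → E) (s : Set α) :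
    eVariationOn (f + g) s ≤ eVariationOn f s + eVariationOn g s := by
  refine iSup_le fun ⟨n, u, hu, hus⟩ => ?_
  calc ∑ i ∈ Finset.range n, edist ((f + g) (u (i + 1))) ((f + g) (u i))
      ≤ ∑ i ∈ Finset.range n,
          (edist (f (u (i + 1))) (f (u i)) + edist (g (u (i + 1))) (g (u i))) :=
        Finset.sum_le_sum fun i _ => edist_add_add_le _ _ _ _
    _ ≤ eVariationOn f s + eVariationOn g s := by
        rw [Finset.sum_add_distrib]
        exact add_le_add (eVariationOn.sum_le hu hus) (eVariationOn.sum_le hu hus)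

theorem eVariationOn_integral_le {α Ω E : Type*} [LinearOrder α] [MeasurableSpace Ω]
    {μ : Measure Ω} [NormedAddCommGroup E] [NormedSpace ℝ E] {Φ : Ω → α → E} {s : Set α}
    (hΦ : ∀ x ∈ s, Integrable (fun ω => Φ ω x) μ) :
    eVariationOn (fun x => ∫ ω, Φ ω x ∂μ) s ≤ ∫⁻ ω, eVariationOn (Φ ω) s ∂μ := by
  refine iSup_le fun ⟨n, u, hu, hus⟩ => ?_
  calc ∑ i ∈ Finset.range n, edist (∫ ω, Φ ω (u (i + 1)) ∂μ) (∫ ω, Φ ω (u i) ∂μ)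
      ≤ ∑ i ∈ Finset.range n, ∫⁻ ω, edist (Φ ω (u (i + 1))) (Φ ω (u i)) ∂μ :=
        Finset.sum_le_sum fun i _ =>
          edist_integral_le_lintegral_edist (hΦ _ (hus _)) (hΦ _ (hus _))
    _ = ∫⁻ ω, ∑ i ∈ Finset.range n, edist (Φ ω (u (i + 1))) (Φ ω (u i)) ∂μ :=
        (lintegral_finsetSum' _ fun i _ =>
          (hΦ _ (hus _)).1.edist (hΦ _ (hus _)).1).symm
    _ ≤ ∫⁻ ω, eVariationOn (Φ ω) s ∂μ :=
        lintegral_mono fun ω => eVariationOn.sum_le hu hus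

theorem eVariationOn_integral_smul_le {α Ω 𝕜 E : Type*} [LinearOrder α] [MeasurableSpace Ω]
    {μ : Measure Ω} [NormedField 𝕜] [NormedAddCommGroup E] [NormedSpace ℝ E] [NormedSpace 𝕜 E]
    {k : Ω → 𝕜} {φ : Ω → α → E} {s : Set α} {C : ENNReal} (hk : AEStronglyMeasurable k μ)
    (hφ : ∀ x ∈ s, Integrable (fun ω => k ω • φ ω x) μ) (hC : ∀ ω, eVariationOn (φ ω) s ≤ C) :
    eVariationOn (fun x => ∫ ω, k ω • φ ω x ∂μ) s ≤ (∫⁻ ω, ‖k ω‖ₑ ∂μ) * C :=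
  calc eVariationOn (fun x => ∫ ω, k ω • φ ω x ∂μ) s
      ≤ ∫⁻ ω, eVariationOn (fun x => k ω • φ ω x) s ∂μ := eVariationOn_integral_le hφ
    _ ≤ ∫⁻ ω, ‖k ω‖ₑ * C ∂μ := lintegral_mono fun ω =>
        ((lipschitzWith_smul (k ω)).lipschitzOnWith.comp_eVariationOn_le
          (Set.mapsTo_univ (φ ω) s)).trans (mul_le_mul_right (hC ω) _)
    _ = (∫⁻ ω, ‖k ω‖ₑ ∂μ) * C := lintegral_mul_const'' C hk.enorm

theorem eVariationOn_Icc_add_Icc {α E : Type*} [LinearOrder α] [PseudoEMetricSpace E]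
    (f : α → E) {a b c : α} (hab : a ≤ b) (hbc : b ≤ c) :
    eVariationOn f (Set.Icc a b) + eVariationOn f (Set.Icc b c) =
      eVariationOn f (Set.Icc a c) := by
  simpa only [Set.univ_inter] using eVariationOn.Icc_add_Icc f hab hbc (Set.mem_univ b)

section OrderedGroup

variable {α E : Type*} [AddCommGroup α] [LinearOrder α] [IsOrderedAddMonoid α]
  [PseudoEMetricSpace E]

theorem eVariationOn_comp_const_add_Icc (f : α → E) (t a b : α) :
    eVariationOn (fun x => f (t + x)) (Set.Icc a b) =
      eVariationOn f (Set.Icc (t + a) (t + b)) := by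
  rw [← Set.image_const_add_Icc]
  exact eVariationOn.comp_eq_of_monotoneOn f (t + ·) fun x _ y _ h =>
    add_le_add_right h t

theorem eVariationOn_comp_const_sub_Icc (f : α → E) (t a b : α) :
    eVariationOn (fun x => f (t - x)) (Set.Icc a b) =
      eVariationOn f (Set.Icc (t - b) (t - a)) := by
  rw [← Set.image_const_sub_Icc]
  exact eVariationOn.comp_eq_of_antitoneOn f (t - ·) fun x _ y _ h => sub_le_sub_left h t

theorem eVariationOn_Icc_add_of_periodic [Archimedean α] {f : α → E} {c : α}
    (hf : Function.Periodic f c) (hc : 0 < c) (a : α) :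
    eVariationOn f (Set.Icc a (a + c)) = eVariationOn f (Set.Icc 0 c) := by
  obtain ⟨n, ⟨h0, hlt⟩, -⟩ := existsUnique_add_zsmul_mem_Ico hc a 0
  have hn : Function.Periodic f (n • c) := hf.zsmul n
  have shift (p : α) (hp : Function.Periodic f p) (x y : α) :
      eVariationOn f (Set.Icc (p + x) (p + y)) = eVariationOn f (Set.Icc x y) := by
    rw [← eVariationOn_comp_const_add_Icc]
    exact congrArg (eVariationOn · _) (funext fun z => by rw [add_comm, hp])
  set b := a + n • c with hb
  rw [zero_add] at hlt
  calc eVariationOn f (Set.Icc a (a + c))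
      = eVariationOn f (Set.Icc b (b + c)) := by
        rw [← shift _ hn, hb, add_comm (n • c) a, ← add_assoc, add_comm (n • c) a]
    _ = eVariationOn f (Set.Icc b c) + eVariationOn f (Set.Icc c (b + c)) :=
        (eVariationOn_Icc_add_Icc f hlt.le (le_add_of_nonneg_left h0)).symm
    _ = eVariationOn f (Set.Icc b c) + eVariationOn f (Set.Icc 0 b) := by
        rw [← shift c hf 0 b, add_zero, add_comm c b]
    _ = eVariationOn f (Set.Icc 0 c) := by
        rw [add_comm, eVariationOn_Icc_add_Icc f h0 hlt.le]

theorem eVariationOn_Icc_add_nsmul_of_periodic [Archimedean α] {f : α → E} {c : α}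
    (hf : Function.Periodic f c) (hc : 0 < c) (a : α) (n : ℕ) :
    eVariationOn f (Set.Icc a (a + n • c)) = n • eVariationOn f (Set.Icc 0 c) := by
  induction n with
  | zero => simp
  | succ n ih =>
    have hle : a ≤ a + n • c := le_add_of_nonneg_right (nsmul_nonneg hc.le n)
    rw [succ_nsmul, ← add_assoc, ← eVariationOn_Icc_add_Icc f hle (le_add_of_nonneg_right hc.le),
      ih, eVariationOn_Icc_add_of_periodic hf hc, succ_nsmul]

end OrderedGroup

theorem integral_comp_add_right_sub_of_add_period {E : Type*} [NormedAddCommGroup E]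
    [NormedSpace ℝ E] [CompleteSpace E] {v : ℝ → E} {c : ℝ} {C : E}
    (hvi : ∀ a b, IntervalIntegrable v volume a b) (hv : ∀ x, v (x + c) = v x + C) (t : ℝ) :
    ∫ x in 0..c, (v (x + t) - v x) = t • C := by
  have hvt : IntervalIntegrable (fun x => v (x + t)) volume 0 c := by
    simpa using (hvi (0 + t) (c + t)).comp_add_right t
  have hvc : IntervalIntegrable (fun x => v (x + c)) volume 0 t := by
    simpa using (hvi (0 + c) (t + c)).comp_add_right c
  calc ∫ x in 0..c, (v (x + t) - v x)
      = (∫ x in t..c + t, v x) - ∫ x in 0..c, v x := by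
        rw [intervalIntegral.integral_sub hvt (hvi 0 c),
          intervalIntegral.integral_comp_add_right, zero_add]
    _ = (∫ x in c..c + t, v x) - ∫ x in 0..t, v x :=
        intervalIntegral.integral_interval_sub_interval_comm' (hvi _ _) (hvi _ _) (hvi _ _)
    _ = ∫ x in 0..t, (v (x + c) - v x) := by
        rw [intervalIntegral.integral_sub hvc (hvi 0 t),
          intervalIntegral.integral_comp_add_right, zero_add, add_comm t c]
    _ = t • C := by simp only [hv, add_sub_cancel_left, intervalIntegral.integral_const, sub_zero]

theorem integral_norm_integral_le {X Y E : Type*} [MeasurableSpace X] [MeasurableSpace Y]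
    [NormedAddCommGroup E] [NormedSpace ℝ E] {μ : Measure X} {ν : Measure Y} [SFinite μ]
    [SFinite ν] {Φ : X × Y → E} (hΦ : Integrable Φ (μ.prod ν)) :
    ∫ x, ‖∫ y, Φ (x, y) ∂ν‖ ∂μ ≤ ∫ y, ∫ x, ‖Φ (x, y)‖ ∂μ ∂ν :=
  calc ∫ x, ‖∫ y, Φ (x, y) ∂ν‖ ∂μ
      ≤ ∫ x, ∫ y, ‖Φ (x, y)‖ ∂ν ∂μ :=
        integral_mono_of_nonneg (ae_of_all _ fun _ => norm_nonneg _) hΦ.integral_norm_prod_left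
          (ae_of_all _ fun _ => norm_integral_le_integral_norm _)
    _ = ∫ y, ∫ x, ‖Φ (x, y)‖ ∂μ ∂ν := integral_integral_swap hΦ.norm

/-- A real function on the line with period `c > 0` and bounded variation on one period. -/
structure IsPeriodicBV (c : ℝ) (f : ℝ → ℝ) : Prop where
  period_pos : 0 < c
  periodic : Function.Periodic f c
  boundedVariationOn : BoundedVariationOn f (Set.Icc 0 c)

namespace IsPeriodicBV

variable {c : ℝ} {f : ℝ → ℝ}

theorem eVariationOn_Icc_add_period (hf : IsPeriodicBV c f) (a : ℝ) :
    eVariationOn f (Set.Icc a (a + c)) = eVariationOn f (Set.Icc 0 c) :=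
  eVariationOn_Icc_add_of_periodic hf.periodic hf.period_pos a

theorem locallyBoundedVariationOn (hf : IsPeriodicBV c f) :
    LocallyBoundedVariationOn f Set.univ := by
  intro a b _ _
  obtain ⟨n, hn⟩ := Archimedean.arch (b - a) hf.period_pos
  have hfin : BoundedVariationOn f (Set.Icc a (a + n • c)) := by
    rw [BoundedVariationOn, eVariationOn_Icc_add_nsmul_of_periodic hf.periodic hf.period_pos,
      nsmul_eq_mul]
    exact ENNReal.mul_ne_top (ENNReal.natCast_ne_top n) hf.boundedVariationOn
  rw [Set.univ_inter]
  exact hfin.mono (Set.Icc_subset_Icc_right (by linarith))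

theorem measurable (hf : IsPeriodicBV c f) : Measurable f := by
  obtain ⟨p, q, hp, hq, rfl⟩ := hf.locallyBoundedVariationOn.exists_monotoneOn_sub_monotoneOn
  exact (monotoneOn_univ.1 hp).measurable.sub (monotoneOn_univ.1 hq).measurable

theorem exists_norm_le (hf : IsPeriodicBV c f) : ∃ M, ∀ x, ‖f x‖ ≤ M := by
  refine ⟨‖f 0‖ + (eVariationOn f (Set.Icc 0 c)).toReal, fun x => ?_⟩
  obtain ⟨y, hy, hxy⟩ := hf.periodic.exists_mem_Ico₀ hf.period_pos x
  have hdist : ‖f y - f 0‖ ≤ (eVariationOn f (Set.Icc 0 c)).toReal := by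
    rw [← dist_eq_norm]
    exact hf.boundedVariationOn.dist_le ⟨hy.1, hy.2.le⟩ ⟨le_rfl, hf.period_pos.le⟩
  rw [hxy]
  linarith [norm_le_norm_add_norm_sub' (f y) (f 0)]

theorem integrable_mul_comp (hf : IsPeriodicBV c f) {Ω : Type*} [MeasurableSpace Ω]
    {μ : Measure Ω} {k φ : Ω → ℝ} (hk : Integrable k μ) (hφ : Measurable φ) :
    Integrable (fun ω => k ω * f (φ ω)) μ := by
  obtain ⟨M, hM⟩ := hf.exists_norm_le
  exact hk.mul_bdd (c := M) (hf.measurable.comp hφ).aestronglyMeasurable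
    (ae_of_all _ fun ω => hM (φ ω))

theorem intervalIntegrable (hf : IsPeriodicBV c f) (a b : ℝ) :
    IntervalIntegrable f volume a b := by
  have hint : ∀ s t : ℝ, IntegrableOn f (Set.Ioc s t) volume := fun s t => by
    simpa [IntegrableOn] using
      hf.integrable_mul_comp (integrable_const (1 : ℝ)) measurable_id
  exact ⟨hint a b, hint b a⟩

theorem exists_monotone_abs_sub_le (hf : IsPeriodicBV c f) :
    ∃ v : ℝ → ℝ, Monotone v ∧ (∀ x, v (x + c) = v x + (eVariationOn f (Set.Icc 0 c)).toReal) ∧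
      ∀ x y, x ≤ y → |f y - f x| ≤ v y - v x := by
  have hloc := hf.locallyBoundedVariationOn
  refine ⟨variationOnFromTo f Set.univ 0,
    monotoneOn_univ.1 (variationOnFromTo.monotoneOn hloc (Set.mem_univ 0)), fun x => ?_,
    fun x y => variationOnFromTo.abs_sub_le_sub_of_le hloc (Set.mem_univ 0) (Set.mem_univ x)
      (Set.mem_univ y)⟩
  rw [← variationOnFromTo.add hloc (Set.mem_univ 0) (Set.mem_univ x) (Set.mem_univ (x + c)),
    variationOnFromTo.eq_of_le f Set.univ (le_add_of_nonneg_right hf.period_pos.le),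
    Set.univ_inter, hf.eVariationOn_Icc_add_period]

theorem integral_abs_sub_translate_le (hf : IsPeriodicBV c f) (t : ℝ) :
    ∫ x in 0..c, |f (x + t) - f x| ≤ |t| * (eVariationOn f (Set.Icc 0 c)).toReal := by
  obtain ⟨v, hv, hv_period, hle⟩ := hf.exists_monotone_abs_sub_le
  have hfi : IntervalIntegrable (fun x => |f (x + t) - f x|) volume 0 c := by
    have hft := (hf.intervalIntegrable (0 + t) (c + t)).comp_add_right t
    simp only [add_sub_cancel_right] at hft
    exact (hft.sub (hf.intervalIntegrable 0 c)).abs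
  have hvi (a b : ℝ) : IntervalIntegrable v volume a b := hv.intervalIntegrable
  have hvt : IntervalIntegrable (fun x => v (x + t) - v x) volume 0 c :=
    (hv.comp (monotone_id.add_const t)).intervalIntegrable.sub (hvi 0 c)
  have hv_integral := integral_comp_add_right_sub_of_add_period hvi hv_period t
  rw [smul_eq_mul] at hv_integral
  rcases le_total 0 t with ht | ht
  · rw [abs_of_nonneg ht, ← hv_integral]
    exact intervalIntegral.integral_mono hf.period_pos.le hfi hvt
      fun x => hle x (x + t) (le_add_of_nonneg_right ht)
  · rw [abs_of_nonpos ht, neg_mul, ← hv_integral, ← intervalIntegral.integral_neg]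
    refine intervalIntegral.integral_mono hf.period_pos.le hfi hvt.neg fun x => ?_
    rw [neg_sub, abs_sub_comm]
    exact hle (x + t) x (add_le_of_nonpos_right ht)

theorem integral_abs_sub_translate_le_sin (hf : IsPeriodicBV 1 f) {y : ℝ}
    (hy : y ∈ Set.Icc 0 1) :
    ∫ x in 0..1, |f (x - y) - f x| ≤
      (eVariationOn f (Set.Icc 0 1)).toReal / 2 * Real.sin (Real.pi * y) := by
  suffices h : ∃ t ∈ Set.Icc (0 : ℝ) (1 / 2), Real.sin (Real.pi * t) = Real.sin (Real.pi * y) ∧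
      ∫ x in 0..1, |f (x - y) - f x| ≤ t * (eVariationOn f (Set.Icc 0 1)).toReal by
    obtain ⟨t, ht, hsin, hle⟩ := h
    have hpi := Real.pi_pos
    have hjordan : 2 * t ≤ Real.sin (Real.pi * t) := by
      have h := Real.mul_le_sin (mul_nonneg hpi.le ht.1) (by nlinarith [ht.2])
      rwa [← mul_assoc, div_mul_cancel₀ _ hpi.ne'] at h
    rw [← hsin]
    nlinarith [ENNReal.toReal_nonneg (a := eVariationOn f (Set.Icc 0 1))]
  rcases le_total y (1 / 2) with h | h
  · refine ⟨y, ⟨hy.1, h⟩, rfl, ?_⟩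
    simpa only [← sub_eq_add_neg, abs_neg, abs_of_nonneg hy.1] using
      hf.integral_abs_sub_translate_le (-y)
  · have hshift (x : ℝ) : f (x + (1 - y)) = f (x - y) := by
      rw [← hf.periodic (x - y), sub_add_eq_add_sub, add_sub_assoc]
    refine ⟨1 - y, ⟨sub_nonneg.2 hy.2, by linarith⟩, ?_, ?_⟩
    · rw [mul_sub, mul_one, Real.sin_pi_sub]
    · simpa only [hshift, abs_of_nonneg (sub_nonneg.2 hy.2)] using
        hf.integral_abs_sub_translate_le (1 - y)

end IsPeriodicBV

/-- The cross-correlation `x ↦ ∫₀ᶜ f(u) g(u + x) du` of two functions of period `c`; for `f = g`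
it is the autocorrelation. -/
noncomputable def crossCorr (c : ℝ) (f g : ℝ → ℝ) (x : ℝ) : ℝ :=
  ∫ u in 0..c, f u * g (u + x)

theorem crossCorr_comm_neg {c : ℝ} {f g : ℝ → ℝ} (hf : Function.Periodic f c)
    (hg : Function.Periodic g c) (x : ℝ) : crossCorr c f g x = crossCorr c g f (-x) := by
  have hper : Function.Periodic (fun u => g u * f (u + -x)) c := fun u => by
    simp only [hg u, add_right_comm u c, hf (u + -x)]
  calc crossCorr c f g x
      = ∫ u in 0..c, g (u + x) * f (u + x + -x) := by
        simp only [crossCorr, add_neg_cancel_right, mul_comm]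
    _ = ∫ u in x..x + c, g u * f (u + -x) := by
        rw [intervalIntegral.integral_comp_add_right (fun u => g u * f (u + -x)), zero_add,
          add_comm c]
    _ = crossCorr c g f (-x) := by
        rw [hper.intervalIntegral_add_eq x 0, zero_add, crossCorr]

namespace IsPeriodicBV

variable {c : ℝ} {f g k : ℝ → ℝ}

theorem eVariationOn_integral_mul_le (hf : IsPeriodicBV c f)
    (hk : IntervalIntegrable k volume 0 c) {s : Set ℝ} {φ : ℝ → ℝ → ℝ}
    (hφ : ∀ x, Measurable (φ x))
    (hV : ∀ u, eVariationOn (fun x => f (φ x u)) s ≤ eVariationOn f (Set.Icc 0 c)) :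
    eVariationOn (fun x => ∫ u in 0..c, k u * f (φ x u)) s ≤
      ENNReal.ofReal (∫ u in 0..c, |k u|) * eVariationOn f (Set.Icc 0 c) := by
  have hk' := (intervalIntegrable_iff_integrableOn_Ioc_of_le hf.period_pos.le).1 hk
  simp only [intervalIntegral.integral_of_le hf.period_pos.le, ← Real.norm_eq_abs]
  rw [ofReal_integral_norm_eq_lintegral_enorm hk']
  exact eVariationOn_integral_smul_le hk'.1 (fun x _ => hf.integrable_mul_comp hk' (hφ x)) hV

theorem eVariationOn_crossCorr_le (hf : IsPeriodicBV c f) (hk : IntervalIntegrable k volume 0 c)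
    (a : ℝ) :
    eVariationOn (crossCorr c k f) (Set.Icc a (a + c)) ≤
      ENNReal.ofReal (∫ u in 0..c, |k u|) * eVariationOn f (Set.Icc 0 c) := by
  refine hf.eVariationOn_integral_mul_le hk (φ := fun x u => u + x)
    (fun x => measurable_add_const x) fun u => ?_
  rw [eVariationOn_comp_const_add_Icc, ← add_assoc, hf.eVariationOn_Icc_add_period]

theorem intervalIntegrable_mul_comp_add (hg : IsPeriodicBV c g)
    (hk : IntervalIntegrable k volume 0 c) (x : ℝ) :
    IntervalIntegrable (fun u => k u * g (u + x)) volume 0 c := by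
  rw [intervalIntegrable_iff_integrableOn_Ioc_of_le hg.period_pos.le] at hk ⊢
  exact hg.integrable_mul_comp hk (measurable_add_const x)

theorem crossCorr_self_sub_crossCorr_self (hf : IsPeriodicBV c f) (hg : IsPeriodicBV c g)
    (x : ℝ) :
    crossCorr c f f x - crossCorr c g g x =
      crossCorr c (fun u => f u - g u) f x + crossCorr c (fun u => f u - g u) g (-x) := by
  have hi {p q : ℝ → ℝ} (hp : IsPeriodicBV c p) (hq : IsPeriodicBV c q) :=
    hq.intervalIntegrable_mul_comp_add (hp.intervalIntegrable 0 c)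
  have hsub {r : ℝ → ℝ} (hr : IsPeriodicBV c r) (x : ℝ) :
      crossCorr c (fun u => f u - g u) r x = crossCorr c f r x - crossCorr c g r x := by
    simp only [crossCorr, sub_mul]
    exact intervalIntegral.integral_sub (hi hf hr x) (hi hg hr x)
  rw [hsub hf, hsub hg, crossCorr_comm_neg hg.periodic hf.periodic,
    crossCorr_comm_neg hg.periodic hg.periodic]
  ring

theorem eVariationOn_crossCorr_self_sub_le (hf : IsPeriodicBV c f) (hg : IsPeriodicBV c g) :
    eVariationOn (fun x => crossCorr c f f x - crossCorr c g g x) (Set.Icc 0 c) ≤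
      ENNReal.ofReal (∫ u in 0..c, |f u - g u|) *
        (eVariationOn f (Set.Icc 0 c) + eVariationOn g (Set.Icc 0 c)) := by
  have hi := (hf.intervalIntegrable 0 c).sub (hg.intervalIntegrable 0 c)
  simp only [hf.crossCorr_self_sub_crossCorr_self hg, mul_add]
  refine (eVariationOn_add_le _ _ _).trans (add_le_add ?_ ?_)
  · simpa using hf.eVariationOn_crossCorr_le hi 0
  · have hrefl := eVariationOn_comp_const_sub_Icc (crossCorr c (fun u => f u - g u) g) 0 0 c
    simp only [zero_sub, sub_zero] at hrefl
    rw [hrefl]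
    simpa using hg.eVariationOn_crossCorr_le hi (-c)

end IsPeriodicBV

/-- The convolution `x ↦ ∫₀ᶜ f(x - y) K(y) dy` over one period of a function of period `c` with a
kernel `K`, whose values outside `(0, c]` do not matter. -/
noncomputable def periodicConv (c : ℝ) (f K : ℝ → ℝ) (x : ℝ) : ℝ :=
  ∫ y in 0..c, f (x - y) * K y

namespace IsPeriodicBV

variable {c : ℝ} {f K : ℝ → ℝ}

theorem eVariationOn_periodicConv_le (hf : IsPeriodicBV c f)
    (hK : IntervalIntegrable K volume 0 c) :
    eVariationOn (periodicConv c f K) (Set.Icc 0 c) ≤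
      ENNReal.ofReal (∫ y in 0..c, |K y|) * eVariationOn f (Set.Icc 0 c) := by
  unfold periodicConv
  simp only [mul_comm (f _)]
  refine hf.eVariationOn_integral_mul_le hK (φ := fun x y => x - y)
    (fun x => measurable_const_sub x) fun u => ?_
  simp only [sub_eq_neg_add]
  rw [eVariationOn_comp_const_add_Icc, add_zero, hf.eVariationOn_Icc_add_period]

protected theorem periodicConv (hf : IsPeriodicBV c f) (hK : IntervalIntegrable K volume 0 c) :
    IsPeriodicBV c (periodicConv c f K) where
  period_pos := hf.period_pos
  periodic x := by simp only [periodicConv, add_sub_right_comm, hf.periodic (x - _)]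
  boundedVariationOn := ne_top_of_le_ne_top
    (ENNReal.mul_ne_top ENNReal.ofReal_ne_top hf.boundedVariationOn)
    (hf.eVariationOn_periodicConv_le hK)

theorem integral_abs_sub_periodicConv_le (hf : IsPeriodicBV c f)
    (hK : IntervalIntegrable K volume 0 c) (hK_integral : ∫ y in 0..c, K y = 1) :
    ∫ x in 0..c, |f x - periodicConv c f K x| ≤
      ∫ y in 0..c, |K y| * ∫ x in 0..c, |f (x - y) - f x| := by
  have hK' := (intervalIntegrable_iff_integrableOn_Ioc_of_le hf.period_pos.le).1 hK
  have hfsub (x : ℝ) : f x - periodicConv c f K x = ∫ y in 0..c, K y * (f x - f (x - y)) := by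
    have hconv : IntervalIntegrable (fun y => K y * f (x - y)) volume 0 c :=
      (intervalIntegrable_iff_integrableOn_Ioc_of_le hf.period_pos.le).2
        (hf.integrable_mul_comp hK' (measurable_const_sub x))
    simp only [mul_sub]
    rw [intervalIntegral.integral_sub (hK.mul_const (f x)) hconv,
      intervalIntegral.integral_mul_const, hK_integral, one_mul]
    simp only [periodicConv, mul_comm]
  have hΦ : Integrable (fun p : ℝ × ℝ => K p.2 * (f p.1 - f (p.1 - p.2)))
      ((volume.restrict (Set.Ioc 0 c)).prod (volume.restrict (Set.Ioc 0 c))) := by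
    have hK₂ := hK'.comp_snd (volume.restrict (Set.Ioc 0 c))
    simp only [mul_sub]
    exact (hf.integrable_mul_comp hK₂ measurable_fst).sub
      (hf.integrable_mul_comp hK₂ (measurable_fst.sub measurable_snd))
  simp only [hfsub]
  simpa only [Real.norm_eq_abs, abs_mul, abs_sub_comm, integral_const_mul,
    intervalIntegral.integral_of_le hf.period_pos.le] using integral_norm_integral_le hΦ

end IsPeriodicBV

theorem card_filter_natCast_sub_natCast_eq (n : ℕ) (h : ℤ) :
    ((Finset.range n ×ˢ Finset.range n).filter fun p => (p.1 : ℤ) - p.2 = h).card =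
      n - h.natAbs := by
  rw [← Finset.card_range (n - h.natAbs)]
  symm
  refine Finset.card_bij (fun k _ => (k + h.toNat, k + (-h).toNat)) (fun k hk => ?_)
    (fun k _ l _ hkl => ?_) (fun p hp => ?_)
  · simp only [Finset.mem_range, Finset.mem_filter, Finset.mem_product] at hk ⊢
    omega
  · simp only [Prod.mk.injEq] at hkl
    omega
  · simp only [Finset.mem_range, Finset.mem_filter, Finset.mem_product] at hp ⊢
    exact ⟨min p.1 p.2, by omega, Prod.ext (by simp only; omega) (by simp only; omega)⟩

theorem geom_sum_mul_geom_sum_inv {F : Type*} [Field F] {z : F} (hz : z ≠ 0) (n : ℕ) :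
    (∑ k ∈ Finset.range n, z ^ k) * ∑ k ∈ Finset.range n, z⁻¹ ^ k =
      ∑ h ∈ Finset.Ioo (-(n : ℤ)) n, ((n : F) - (|h| : ℤ)) * z ^ h := by
  have hmaps : ∀ p ∈ Finset.range n ×ˢ Finset.range n,
      (p.1 : ℤ) - p.2 ∈ Finset.Ioo (-(n : ℤ)) n := fun p hp => by
    simp only [Finset.mem_range, Finset.mem_product, Finset.mem_Ioo] at hp ⊢
    omega
  calc (∑ k ∈ Finset.range n, z ^ k) * ∑ k ∈ Finset.range n, z⁻¹ ^ k
      = ∑ p ∈ Finset.range n ×ˢ Finset.range n, z ^ ((p.1 : ℤ) - p.2) := by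
        simp only [Finset.sum_mul_sum, Finset.sum_product, zpow_sub₀ hz, zpow_natCast, inv_pow,
          div_eq_mul_inv]
    _ = ∑ h ∈ Finset.Ioo (-(n : ℤ)) n, (n - h.natAbs : ℕ) • z ^ h := by
        rw [← Finset.sum_fiberwise_of_maps_to' hmaps (z ^ ·)]
        simp only [Finset.sum_const, card_filter_natCast_sub_natCast_eq]
    _ = ∑ h ∈ Finset.Ioo (-(n : ℤ)) n, ((n : F) - (|h| : ℤ)) * z ^ h := by
        refine Finset.sum_congr rfl fun h hh => ?_
        rw [Finset.mem_Ioo] at hh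
        rw [nsmul_eq_mul, Nat.cast_sub (by omega), Int.abs_eq_natAbs, Int.cast_natCast]

/-- The Fejér kernel of order `H` for period `1`, written as a normalized square so that its
positivity is visible; its Fourier expansion is `fejerKernel_eq_sum`. For `H = 0` division by zero
makes it `0`. -/
noncomputable def fejerKernel (H : ℕ) (x : ℝ) : ℝ :=
  ‖∑ k ∈ Finset.range H, Complex.exp (2 * Real.pi * x * Complex.I) ^ k‖ ^ 2 / H

theorem fejerKernel_nonneg (H : ℕ) (x : ℝ) : 0 ≤ fejerKernel H x := by
  unfold fejerKernel
  positivity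

theorem continuous_fejerKernel (H : ℕ) : Continuous (fejerKernel H) := by
  unfold fejerKernel
  fun_prop

theorem fejerKernel_eq_sum {H : ℕ} (hH : H ≠ 0) (x : ℝ) :
    (fejerKernel H x : ℂ) = ∑ h ∈ Finset.Ioo (-(H : ℤ)) H,
      (1 - |(h : ℝ)| / H) * Complex.exp (2 * Real.pi * h * x * Complex.I) := by
  set z := Complex.exp (2 * Real.pi * x * Complex.I) with hz
  have hz_norm : ‖z‖ = 1 := by
    rw [hz]
    exact_mod_cast Complex.norm_exp_ofReal_mul_I (2 * Real.pi * x)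
  have hz_ne : z ≠ 0 := Complex.exp_ne_zero _
  have hH' : (H : ℂ) ≠ 0 := Nat.cast_ne_zero.2 hH
  calc (fejerKernel H x : ℂ)
      = (∑ k ∈ Finset.range H, z ^ k) * (∑ k ∈ Finset.range H, z⁻¹ ^ k) / H := by
        rw [fejerKernel, ← hz]
        push_cast
        rw [← Complex.mul_conj', map_sum]
        simp only [map_pow, Complex.inv_eq_conj hz_norm]
    _ = ∑ h ∈ Finset.Ioo (-(H : ℤ)) H, (1 - |(h : ℝ)| / H) * z ^ h := by
        rw [geom_sum_mul_geom_sum_inv hz_ne, Finset.sum_div]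
        refine Finset.sum_congr rfl fun h _ => ?_
        rw [← Complex.ofReal_intCast |h|, Int.cast_abs]
        field_simp
    _ = _ := by
        refine Finset.sum_congr rfl fun h _ => ?_
        rw [hz, ← Complex.exp_int_mul]
        ring_nf

theorem integral_exp_two_pi_int_mul_I (h : ℤ) :
    ∫ x : ℝ in 0..1, Complex.exp (2 * Real.pi * h * x * Complex.I) = if h = 0 then 1 else 0 := by
  split_ifs with hh
  · simp [hh]
  · have hc : 2 * Real.pi * h * Complex.I ≠ 0 := by simp [hh, Real.pi_ne_zero]
    have hperiod : Complex.exp (2 * Real.pi * h * Complex.I) = 1 := by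
      rw [← Complex.exp_int_mul_two_pi_mul_I h]
      ring_nf
    have hassoc (x : ℝ) : 2 * Real.pi * h * x * Complex.I = 2 * Real.pi * h * Complex.I * x := by
      ring
    simp only [hassoc]
    rw [integral_exp_mul_complex hc]
    simp [hperiod]

theorem integral_fejerKernel {H : ℕ} (hH : H ≠ 0) : ∫ x in 0..1, fejerKernel H x = 1 := by
  apply Complex.ofReal_injective
  rw [← intervalIntegral.integral_ofReal]
  simp only [fejerKernel_eq_sum hH]
  rw [intervalIntegral.integral_finsetSum fun h _ => by
    apply Continuous.intervalIntegrable; fun_prop]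
  simp [intervalIntegral.integral_const_mul, integral_exp_two_pi_int_mul_I, hH]

theorem fejerKernel_mul_sin_sq_le (H : ℕ) (x : ℝ) :
    fejerKernel H x * Real.sin (Real.pi * x) ^ 2 ≤ 1 / H := by
  set z := Complex.exp (2 * Real.pi * x * Complex.I) with hz
  have hz' : z = Complex.exp (Complex.I * (2 * Real.pi * x : ℝ)) := by
    rw [hz]
    push_cast
    ring_nf
  have hz_norm : ‖z‖ = 1 := by rw [hz', Complex.norm_exp_I_mul_ofReal]
  have hz_sub : ‖z - 1‖ = 2 * |Real.sin (Real.pi * x)| := by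
    rw [hz', Complex.norm_exp_I_mul_ofReal_sub_one, norm_mul, Real.norm_eq_abs, Real.norm_eq_abs,
      abs_two]
    ring_nf
  have hgeom : ‖∑ k ∈ Finset.range H, z ^ k‖ * |Real.sin (Real.pi * x)| ≤ 1 := by
    have h : ‖(∑ k ∈ Finset.range H, z ^ k) * (z - 1)‖ ≤ 2 := by
      rw [geom_sum_mul]
      calc ‖z ^ H - 1‖ ≤ ‖z ^ H‖ + ‖(1 : ℂ)‖ := norm_sub_le _ _
        _ = 2 := by rw [norm_pow, hz_norm, one_pow, norm_one, one_add_one_eq_two]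
    rw [norm_mul, hz_sub] at h
    linarith
  calc fejerKernel H x * Real.sin (Real.pi * x) ^ 2
      = (‖∑ k ∈ Finset.range H, z ^ k‖ * |Real.sin (Real.pi * x)|) ^ 2 / (H : ℝ) := by
        rw [fejerKernel, ← hz, mul_pow, sq_abs]
        ring
    _ ≤ 1 / (H : ℝ) := by
        gcongr
        exact pow_le_one₀ (by positivity) hgeom

theorem integral_fejerKernel_mul_sin_le {H : ℕ} (hH : H ≠ 0) :
    ∫ x in 0..1, fejerKernel H x * Real.sin (Real.pi * x) ≤ 1 / √H := by
  have hr : 0 < √(H : ℝ) := Real.sqrt_pos.2 (Nat.cast_pos.2 (Nat.pos_of_ne_zero hH))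
  have hr_sq : √(H : ℝ) ^ 2 = H := Real.sq_sqrt (Nat.cast_nonneg H)
  set r := √(H : ℝ)
  have hpointwise (x : ℝ) : fejerKernel H x * Real.sin (Real.pi * x) ≤
      fejerKernel H x / (2 * r) + 1 / (2 * r) := by
    have hyoung : Real.sin (Real.pi * x) ≤
        1 / (2 * r) + r / 2 * Real.sin (Real.pi * x) ^ 2 := by
      field_simp
      nlinarith [sq_nonneg (r * Real.sin (Real.pi * x) - 1)]
    have hcap := fejerKernel_mul_sin_sq_le H x
    calc fejerKernel H x * Real.sin (Real.pi * x)
        ≤ fejerKernel H x * (1 / (2 * r) + r / 2 * Real.sin (Real.pi * x) ^ 2) :=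
          mul_le_mul_of_nonneg_left hyoung (fejerKernel_nonneg H x)
      _ = fejerKernel H x / (2 * r) +
            r / 2 * (fejerKernel H x * Real.sin (Real.pi * x) ^ 2) := by ring
      _ ≤ fejerKernel H x / (2 * r) + r / 2 * (1 / H) := by gcongr
      _ = fejerKernel H x / (2 * r) + 1 / (2 * r) := by rw [← hr_sq]; field_simp
  have hK := continuous_fejerKernel H
  have hKi : IntervalIntegrable (fun x => fejerKernel H x / (2 * r)) volume 0 1 :=
    (hK.div_const _).intervalIntegrable 0 1
  calc ∫ x in 0..1, fejerKernel H x * Real.sin (Real.pi * x)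
      ≤ ∫ x in 0..1, (fejerKernel H x / (2 * r) + 1 / (2 * r)) :=
        intervalIntegral.integral_mono zero_le_one
          (Continuous.intervalIntegrable (by fun_prop) 0 1)
          (hKi.add intervalIntegrable_const) hpointwise
    _ = 1 / r := by
        rw [intervalIntegral.integral_add hKi intervalIntegrable_const,
          intervalIntegral.integral_div, integral_fejerKernel hH, intervalIntegral.integral_const]
        rw [sub_zero, one_smul]
        ring

/-- The Fejér mean of order `H` of a `1`-periodic function, i.e. the Cesàro mean of its Fourier
partial sums, encoded as the convolution with the Fejér kernel. -/
noncomputable def fejerMean (H : ℕ) (f : ℝ → ℝ) : ℝ → ℝ :=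
  periodicConv 1 f (fejerKernel H)

namespace IsPeriodicBV

variable {f : ℝ → ℝ}

protected theorem fejerMean (hf : IsPeriodicBV 1 f) (H : ℕ) : IsPeriodicBV 1 (fejerMean H f) :=
  hf.periodicConv ((continuous_fejerKernel H).intervalIntegrable 0 1)

theorem eVariationOn_fejerMean_le (hf : IsPeriodicBV 1 f) {H : ℕ} (hH : H ≠ 0) :
    eVariationOn (fejerMean H f) (Set.Icc 0 1) ≤ eVariationOn f (Set.Icc 0 1) := by
  have h := hf.eVariationOn_periodicConv_le ((continuous_fejerKernel H).intervalIntegrable 0 1)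
  simpa only [abs_of_nonneg (fejerKernel_nonneg H _), integral_fejerKernel hH, ENNReal.ofReal_one,
    one_mul, fejerMean] using h

theorem integral_abs_sub_fejerMean_le (hf : IsPeriodicBV 1 f) {H : ℕ} (hH : H ≠ 0) :
    ∫ x in 0..1, |f x - fejerMean H f x| ≤
      (eVariationOn f (Set.Icc 0 1)).toReal / 2 * (1 / √H) := by
  set V := (eVariationOn f (Set.Icc 0 1)).toReal
  have hK := continuous_fejerKernel H
  calc ∫ x in 0..1, |f x - fejerMean H f x|
      ≤ ∫ y in 0..1, |fejerKernel H y| * ∫ x in 0..1, |f (x - y) - f x| :=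
        hf.integral_abs_sub_periodicConv_le (hK.intervalIntegrable 0 1) (integral_fejerKernel hH)
    _ ≤ ∫ y in 0..1, V / 2 * (fejerKernel H y * Real.sin (Real.pi * y)) := by
        simp only [intervalIntegral.integral_of_le zero_le_one]
        refine integral_mono_of_nonneg
          (ae_of_all _ fun y => mul_nonneg (abs_nonneg _) (integral_nonneg fun _ => abs_nonneg _))
          (Continuous.integrableOn_Ioc (by fun_prop))
          (ae_restrict_of_forall_mem measurableSet_Ioc fun y hy => ?_)
        have hy := hf.integral_abs_sub_translate_le_sin ⟨hy.1.le, hy.2⟩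
        rw [intervalIntegral.integral_of_le zero_le_one] at hy
        beta_reduce
        rw [abs_of_nonneg (fejerKernel_nonneg H y), mul_left_comm]
        exact mul_le_mul_of_nonneg_left hy (fejerKernel_nonneg H y)
    _ ≤ V / 2 * (1 / √H) := by
        rw [intervalIntegral.integral_const_mul]
        gcongr
        exact integral_fejerKernel_mul_sin_le hH

theorem tendsto_integral_abs_sub_fejerMean (hf : IsPeriodicBV 1 f) :
    Tendsto (fun H => ∫ x in 0..1, |f x - fejerMean H f x|) atTop (nhds 0) := by
  have hrate : Tendsto (fun H : ℕ => (eVariationOn f (Set.Icc 0 1)).toReal / 2 * (1 / √H)) atTop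
      (nhds 0) := by
    have hsqrt : Tendsto (fun H : ℕ => √(H : ℝ)) atTop atTop :=
      Real.tendsto_sqrt_atTop.comp tendsto_natCast_atTop_atTop
    simpa only [one_div, mul_zero, Pi.inv_apply] using hsqrt.inv_tendsto_atTop.const_mul _
  refine squeeze_zero' (Eventually.of_forall fun H =>
    intervalIntegral.integral_nonneg zero_le_one fun _ _ => abs_nonneg _) ?_ hrate
  filter_upwards [eventually_ne_atTop 0] with H hH using hf.integral_abs_sub_fejerMean_le hH

theorem eVariationOn_crossCorr_self_sub_fejerMean_le (hf : IsPeriodicBV 1 f) {H : ℕ}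
    (hH : H ≠ 0) :
    eVariationOn (fun x => crossCorr 1 f f x - crossCorr 1 (fejerMean H f) (fejerMean H f) x)
        (Set.Icc 0 1) ≤
      ENNReal.ofReal (2 * (eVariationOn f (Set.Icc 0 1)).toReal *
        ∫ x in 0..1, |f x - fejerMean H f x|) := by
  refine (hf.eVariationOn_crossCorr_self_sub_le (hf.fejerMean H)).trans ?_
  rw [mul_comm, ENNReal.ofReal_mul (by positivity), ENNReal.ofReal_mul zero_le_two,
    ENNReal.ofReal_toReal hf.boundedVariationOn, ENNReal.ofReal_ofNat, two_mul]
  gcongr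
  exact hf.eVariationOn_fejerMean_le hH

theorem tendsto_eVariationOn_crossCorr_self_sub_fejerMean (hf : IsPeriodicBV 1 f) :
    Tendsto (fun H => (eVariationOn (fun x => crossCorr 1 f f x -
      crossCorr 1 (fejerMean H f) (fejerMean H f) x) (Set.Icc 0 1)).toReal) atTop (nhds 0) := by
  set V := (eVariationOn f (Set.Icc 0 1)).toReal
  have hlim : Tendsto (fun H => 2 * V * ∫ x in 0..1, |f x - fejerMean H f x|) atTop (nhds 0) := by
    simpa only [mul_zero] using hf.tendsto_integral_abs_sub_fejerMean.const_mul (2 * V)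
  refine squeeze_zero' (Eventually.of_forall fun _ => ENNReal.toReal_nonneg) ?_ hlim
  filter_upwards [eventually_ne_atTop 0] with H hH
  exact ENNReal.toReal_le_of_le_ofReal
    (mul_nonneg (by positivity) (intervalIntegral.integral_nonneg zero_le_one fun _ _ =>
      abs_nonneg _))
    (hf.eVariationOn_crossCorr_self_sub_fejerMean_le hH)

end IsPeriodicBV

/-- For `f` `1`-periodic of bounded variation on `[0,1]`, with Fejér
means `f_H`, autocorrelations `G(x) = ∫₀¹ f(u)f(u+x)du` and
`G_H(x) = ∫₀¹ f_H(u)f_H(u+x)du`, one has `V(G − G_H) ≤ 2 V(f) ‖f − f_H‖_{L¹}`, and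
consequently `V(G − G_H) → 0` as `H → ∞`. -/
theorem stmt11
    (f : ℝ → ℝ) (hfp : Function.Periodic f 1) (hfm : Measurable f)
    (hfBV : BoundedVariationOn f (Set.Icc 0 1))
    (FH : ℕ → ℝ → ℝ)
    (hFH : ∀ H : ℕ, 1 ≤ H → ∀ x : ℝ, (FH H x : ℂ) =
      ∑ h ∈ Finset.Ioo (-(H:ℤ)) (H:ℤ),
        (1 - |(h:ℝ)| / H) * Complex.exp (2 * Real.pi * h * x * Complex.I))
    (fH : ℕ → ℝ → ℝ)
    (hfH : ∀ H : ℕ, 1 ≤ H → ∀ x, fH H x = ∫ y in (0:ℝ)..1, f (x - y) * FH H y)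
    (G : ℝ → ℝ) (hG : ∀ x, G x = ∫ u in (0:ℝ)..1, f u * f (u + x))
    (GH : ℕ → ℝ → ℝ)
    (hGH : ∀ H : ℕ, 1 ≤ H → ∀ x, GH H x = ∫ u in (0:ℝ)..1, fH H u * fH H (u + x)) :
    (∀ H : ℕ, 1 ≤ H →
      eVariationOn (fun x => G x - GH H x) (Set.Icc 0 1) ≤
        ENNReal.ofReal (2 * (eVariationOn f (Set.Icc 0 1)).toReal *
          ∫ x in (0:ℝ)..1, |f x - fH H x|)) ∧
    Tendsto (fun H : ℕ => (eVariationOn (fun x => G x - GH H x) (Set.Icc 0 1)).toReal)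
      atTop (nhds 0) := by
  have hf : IsPeriodicBV 1 f := ⟨one_pos, hfp, hfBV⟩
  have hG_eq : G = crossCorr 1 f f := funext hG
  have hFH_eq (H : ℕ) (hH : 1 ≤ H) : FH H = fejerKernel H := funext fun x =>
    Complex.ofReal_injective ((hFH H hH x).trans (fejerKernel_eq_sum (by omega) x).symm)
  have hfH_eq (H : ℕ) (hH : 1 ≤ H) : fH H = fejerMean H f := funext fun x => by
    rw [hfH H hH, hFH_eq H hH, fejerMean, periodicConv]
  have hGH_eq (H : ℕ) (hH : 1 ≤ H) : GH H = crossCorr 1 (fejerMean H f) (fejerMean H f) :=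
    funext fun x => by rw [hGH H hH, hfH_eq H hH, crossCorr]
  refine ⟨fun H hH => ?_, hf.tendsto_eVariationOn_crossCorr_self_sub_fejerMean.congr' ?_⟩
  · rw [hG_eq, hGH_eq H hH, hfH_eq H hH]
    exact hf.eVariationOn_crossCorr_self_sub_fejerMean_le (by omega)
  · filter_upwards [eventually_ge_atTop 1] with H hH
    rw [hG_eq, hGH_eq H hH]
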